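/- Let P(x,y) = (1/2)x³y + (1/2)xy³ and Q(x,y) = (1/8)x⁴ + (3/4)x²y² + (1/8)y⁴, let μ = δ₀ and ν = (1/2)δ₀ + (1/2)δ₁, and let P(μ,ν), Q(μ,ν) be the corresponding convolution polynomials of measures. Then P(μ,ν) = (5/16)δ₀ + (7/16)δ₁ + (3/16)δ₂ + (1/16)δ₃ and Q(μ,ν) = (41/128)δ₀ + (52/128)δ₁ + (30/128)δ₂ + (4/128)δ₃ + (1/128)δ₄, and for the convex function φ(x) = max(0, x−2) one has ∫φ dP(μ,ν) = 1/16 > 6/128 = ∫φ dQ(μ,ν); in particular, P(μ,ν) ≼_cx Q(μ,ν) does NOT hold, even though (F_μ − F_ν)*(F_μ − F_ν) ≥ 0. -/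

import Mathlib

open MeasureTheory Set

noncomputable def distFun (μ : Measure ℝ) (x : ℝ) : ℝ := (μ (Set.Iic x)).toReal

/-- Convolution of two real functions with respect to Lebesgue measure. -/
noncomputable def fconv (h₁ h₂ : ℝ → ℝ) (A : ℝ) : ℝ := ∫ t, h₁ t * h₂ (A - t)

/-- Convex order for finite Borel measures on ℝ. -/
def ConvexOrder (μ ν : Measure ℝ) : Prop :=
  ∀ φ : ℝ → ℝ, ConvexOn ℝ Set.univ φ → Integrable φ μ → Integrable φ ν →
    ∫ x, φ x ∂μ ≤ ∫ x, φ x ∂ν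

/-- Usual stochastic order: `μ ≤ₛₜ ν`. -/
def StochOrder (μ ν : Measure ℝ) : Prop :=
  μ Set.univ = ν Set.univ ∧ ∀ x : ℝ, distFun ν x ≤ distFun μ x

/-- k-fold convolution power of a measure. -/
noncomputable def convPow (μ : Measure ℝ) : ℕ → Measure ℝ
  | 0 => Measure.dirac 0
  | n + 1 => Measure.conv (convPow μ n) μ

/-- Convolution of a list of measures. -/
noncomputable def convList : List (Measure ℝ) → Measure ℝ
  | [] => Measure.dirac 0
  | m :: l => Measure.conv m (convList l)

/-- Convolution polynomial of measures associated with a multivariate polynomial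
with non-negative coefficients. -/
noncomputable def convPoly {m : ℕ} (P : MvPolynomial (Fin m) ℝ) (μ : Fin m → Measure ℝ) :
    Measure ℝ :=
  ∑ d ∈ P.support,
    ENNReal.ofReal (MvPolynomial.coeff d P) • convList (List.ofFn fun i => convPow (μ i) (d i))

/-- The measure μ = δ₀ of the counterexample. -/
noncomputable def cexμ : Measure ℝ := Measure.dirac 0

/-- The measure ν = ½δ₀ + ½δ₁ of the counterexample. -/
noncomputable def cexν : Measure ℝ :=
  (2 : ENNReal)⁻¹ • Measure.dirac (0 : ℝ) + (2 : ENNReal)⁻¹ • Measure.dirac (1 : ℝ)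

/-- P(μ,ν) = ½ μ^{∗3}∗ν + ½ μ∗ν^{∗3}. -/
noncomputable def cexP : Measure ℝ :=
  (2 : ENNReal)⁻¹ • Measure.conv (convPow cexμ 3) (convPow cexν 1) +
    (2 : ENNReal)⁻¹ • Measure.conv (convPow cexμ 1) (convPow cexν 3)

/-- Q(μ,ν) = ⅛ μ^{∗4} + ¾ μ^{∗2}∗ν^{∗2} + ⅛ ν^{∗4}. -/
noncomputable def cexQ : Measure ℝ :=
  (8 : ENNReal)⁻¹ • convPow cexμ 4 +
    ENNReal.ofReal (3 / 4) • Measure.conv (convPow cexμ 2) (convPow cexν 2) +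
    (8 : ENNReal)⁻¹ • convPow cexν 4

/-! Finitely supported measures on `ℝ` under convolution form the monoid algebra `ℝ≥0[ℝ]`. There
`μ = δ₀` is the unit and, with `X = δ₁`, `ν = (1 + X) / 2`, so `P(μ, ν)` and `Q(μ, ν)` are the
polynomials `(ν + ν³) / 2` and `1 / 8 + 3 ν² / 4 + ν⁴ / 8` in `X`, whose coefficients are the
weights at `0, 1, 2, …`. The convolution `(F_μ - F_ν) * (F_μ - F_ν)` is nonnegative because `μ` puts
all its mass at the left end of the support of `ν`, whence `F_ν ≤ F_μ`. -/

open scoped NNReal AddMonoidAlgebra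

section AtomicMeasure

variable {M : Type*} [MeasurableSpace M]

/-- The measure `∑ aᵢ δ_{xᵢ}` attached to a finite formal sum `∑ aᵢ xᵢ`, used to compute
convolutions inside the monoid algebra. The weights lie in `ℝ≥0` rather than `ℝ≥0∞`, which makes
every such measure finite and every function integrable. -/
noncomputable def atomicMeasure : ℝ≥0[M] →ₗ[ℝ≥0] Measure M :=
  Finsupp.linearCombination ℝ≥0 Measure.dirac ∘ₗ
    (AddMonoidAlgebra.coeffLinearEquiv ℝ≥0).toLinearMap

@[simp]
lemma atomicMeasure_single (x : M) (a : ℝ≥0) :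
    atomicMeasure (.single x a) = a • Measure.dirac x := by
  simp [atomicMeasure]

instance isFiniteMeasure_atomicMeasure (p : ℝ≥0[M]) : IsFiniteMeasure (atomicMeasure p) := by
  induction p using AddMonoidAlgebra.induction_linear with
  | zero => rw [map_zero]; infer_instance
  | add p q hp hq => rw [map_add]; infer_instance
  | single x a => rw [atomicMeasure_single]; infer_instance

section Integral

variable [MeasurableSingletonClass M] {E : Type*} [NormedAddCommGroup E]

lemma integrable_atomicMeasure (f : M → E) (p : ℝ≥0[M]) : Integrable f (atomicMeasure p) := by
  induction p using AddMonoidAlgebra.induction_linear with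
  | zero => simp
  | add p q hp hq => rw [map_add]; exact hp.add_measure hq
  | single x a =>
    rw [atomicMeasure_single]
    exact (integrable_dirac (by simp)).smul_measure_nnreal

lemma integral_atomicMeasure [NormedSpace ℝ E] [CompleteSpace E] (f : M → E) (p : ℝ≥0[M]) :
    ∫ x, f x ∂atomicMeasure p = Finsupp.linearCombination ℝ≥0 f p.coeff := by
  induction p using AddMonoidAlgebra.induction_linear with
  | zero => simp
  | add p q hp hq =>
    rw [map_add, integral_add_measure (integrable_atomicMeasure f p) (integrable_atomicMeasure f q),
      hp, hq, AddMonoidAlgebra.coeff_add, map_add]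
  | single x a => simp [integral_smul_nnreal_measure]

end Integral

section Convolution

lemma atomicMeasure_one [Zero M] : atomicMeasure (1 : ℝ≥0[M]) = Measure.dirac 0 := by
  rw [AddMonoidAlgebra.one_def, atomicMeasure_single, one_smul]

variable [AddMonoid M] [MeasurableAdd₂ M]

lemma smul_dirac_conv_smul_dirac (x y : M) (a b : ℝ≥0) :
    (a • Measure.dirac x).conv (b • Measure.dirac y) = (a * b) • Measure.dirac (x + y) := by
  simp only [ENNReal.smul_def, ENNReal.coe_mul, Measure.conv_smul_left, Measure.conv_smul_right,
    Measure.dirac_conv_dirac, smul_smul, mul_comm (b : ENNReal)]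

lemma atomicMeasure_mul (p q : ℝ≥0[M]) :
    atomicMeasure (p * q) = (atomicMeasure p).conv (atomicMeasure q) := by
  induction p using AddMonoidAlgebra.induction_linear with
  | zero => simp
  | add p₁ p₂ hp₁ hp₂ => rw [add_mul, map_add, hp₁, hp₂, map_add, Measure.add_conv]
  | single x a =>
    induction q using AddMonoidAlgebra.induction_linear with
    | zero => simp
    | add q₁ q₂ hq₁ hq₂ => rw [mul_add, map_add, hq₁, hq₂, map_add, Measure.conv_add]
    | single y b =>
      rw [AddMonoidAlgebra.single_mul_single, atomicMeasure_single, atomicMeasure_single,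
        atomicMeasure_single, smul_dirac_conv_smul_dirac]

end Convolution

end AtomicMeasure

lemma convPow_atomicMeasure (p : ℝ≥0[ℝ]) (n : ℕ) :
    convPow (atomicMeasure p) n = atomicMeasure (p ^ n) := by
  induction n with
  | zero => rw [convPow, pow_zero, atomicMeasure_one]
  | succ n ih => rw [convPow, ih, pow_succ, atomicMeasure_mul]

lemma ConvexOrder.integral_atomicMeasure_le {p q : ℝ≥0[ℝ]}
    (h : ConvexOrder (atomicMeasure p) (atomicMeasure q)) {φ : ℝ → ℝ}
    (hφ : ConvexOn ℝ univ φ) : ∫ x, φ x ∂atomicMeasure p ≤ ∫ x, φ x ∂atomicMeasure q :=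
  h φ hφ (integrable_atomicMeasure φ p) (integrable_atomicMeasure φ q)

lemma convexOn_max_zero_sub (c : ℝ) : ConvexOn ℝ univ fun x : ℝ ↦ max 0 (x - c) :=
  (convexOn_const 0 convex_univ).sup ((convexOn_id convex_univ).sub (concaveOn_const c convex_univ))

lemma distFun_le_distFun_dirac {μ : Measure ℝ} [IsProbabilityMeasure μ] {a : ℝ}
    (h : μ (Iio a) = 0) (t : ℝ) : distFun μ t ≤ distFun (Measure.dirac a) t := by
  refine ENNReal.toReal_mono (measure_ne_top _ _) ?_
  rcases lt_or_ge t a with hta | hat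
  · rw [measure_mono_null (Iic_subset_Iio.2 hta) h]
    exact zero_le
  · rw [Measure.dirac_apply_of_mem (mem_Iic.2 hat)]
    exact prob_le_one

lemma fconv_nonneg {h₁ h₂ : ℝ → ℝ} (nonneg₁ : 0 ≤ h₁) (nonneg₂ : 0 ≤ h₂) (A : ℝ) :
    0 ≤ fconv h₁ h₂ A :=
  integral_nonneg fun t ↦ mul_nonneg (nonneg₁ t) (nonneg₂ (A - t))

section Scalars

variable {M : Type*} [MeasurableSpace M] (n : ℕ) [n.AtLeastTwo] (r : ℝ) (m : Measure M)

lemma ennreal_inv_ofNat_smul : (ofNat(n) : ENNReal)⁻¹ • m = (ofNat(n) : ℝ≥0)⁻¹ • m := by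
  rw [ENNReal.smul_def, ENNReal.coe_inv (by simp), ENNReal.coe_ofNat]

lemma ennreal_ofReal_smul : ENNReal.ofReal r • m = r.toNNReal • m := rfl

end Scalars

/-- The formal sum of `δ₁`, in the role of the variable of a generating function. -/
noncomputable def unitAtom : ℝ≥0[ℝ] := .single 1 1

/-- The formal sum of the fair coin `½δ₀ + ½δ₁`, that is of the measure `ν`. -/
noncomputable def fairCoin : ℝ≥0[ℝ] := (2⁻¹ : ℝ≥0) • (1 + unitAtom)

lemma cexμ_eq_atomicMeasure : cexμ = atomicMeasure 1 := atomicMeasure_one.symm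

lemma cexν_eq_atomicMeasure : cexν = atomicMeasure fairCoin := by
  simp [cexν, fairCoin, unitAtom, atomicMeasure_one, ennreal_inv_ofNat_smul]

lemma cexP_eq_atomicMeasure_fairCoin :
    cexP = atomicMeasure ((2⁻¹ : ℝ≥0) • fairCoin + (2⁻¹ : ℝ≥0) • fairCoin ^ 3) := by
  simp [cexP, cexμ_eq_atomicMeasure, cexν_eq_atomicMeasure, convPow_atomicMeasure,
    ← atomicMeasure_mul, ennreal_inv_ofNat_smul]

lemma cexQ_eq_atomicMeasure_fairCoin :
    cexQ = atomicMeasure ((8⁻¹ : ℝ≥0) • 1 + (3 / 4 : ℝ≥0) • fairCoin ^ 2 +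
      (8⁻¹ : ℝ≥0) • fairCoin ^ 4) := by
  simp [cexQ, cexμ_eq_atomicMeasure, cexν_eq_atomicMeasure, convPow_atomicMeasure,
    ← atomicMeasure_mul, ennreal_inv_ofNat_smul, ennreal_ofReal_smul, Real.toNNReal_div]

lemma cexP_eq_atomicMeasure :
    cexP = atomicMeasure (.single 0 (5 / 16) + .single 1 (7 / 16) + .single 2 (3 / 16) +
      .single 3 (1 / 16)) := by
  have expansion : (2⁻¹ : ℝ≥0) • fairCoin + (2⁻¹ : ℝ≥0) • fairCoin ^ 3 =
      (5 / 16 : ℝ≥0) • 1 + (7 / 16 : ℝ≥0) • unitAtom + (3 / 16 : ℝ≥0) • unitAtom ^ 2 +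
        (1 / 16 : ℝ≥0) • unitAtom ^ 3 := by
    rw [fairCoin]
    algebra
  rw [cexP_eq_atomicMeasure_fairCoin, expansion]
  simp [unitAtom, AddMonoidAlgebra.one_def]

lemma cexQ_eq_atomicMeasure :
    cexQ = atomicMeasure (.single 0 (41 / 128) + .single 1 (52 / 128) + .single 2 (30 / 128) +
      .single 3 (4 / 128) + .single 4 (1 / 128)) := by
  have expansion : (8⁻¹ : ℝ≥0) • 1 + (3 / 4 : ℝ≥0) • fairCoin ^ 2 + (8⁻¹ : ℝ≥0) • fairCoin ^ 4 =
      (41 / 128 : ℝ≥0) • 1 + (52 / 128 : ℝ≥0) • unitAtom + (30 / 128 : ℝ≥0) • unitAtom ^ 2 +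
        (4 / 128 : ℝ≥0) • unitAtom ^ 3 + (1 / 128 : ℝ≥0) • unitAtom ^ 4 := by
    rw [fairCoin]
    algebra
  rw [cexQ_eq_atomicMeasure_fairCoin, expansion]
  simp [unitAtom, AddMonoidAlgebra.one_def]

lemma integral_max_zero_sub_two_cexP : ∫ x, max 0 (x - 2) ∂cexP = 1 / 16 := by
  rw [cexP_eq_atomicMeasure, integral_atomicMeasure]
  norm_num [NNReal.smul_def]

lemma integral_max_zero_sub_two_cexQ : ∫ x, max 0 (x - 2) ∂cexQ = 6 / 128 := by
  rw [cexQ_eq_atomicMeasure, integral_atomicMeasure]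
  norm_num [NNReal.smul_def]

instance isProbabilityMeasure_cexν : IsProbabilityMeasure cexν :=
  ⟨by simp [cexν, ENNReal.inv_two_add_inv_two]⟩

lemma cexν_Iio_zero : cexν (Iio 0) = 0 := by simp [cexν]

lemma distFun_cexν_le_distFun_cexμ (t : ℝ) : distFun cexν t ≤ distFun cexμ t :=
  distFun_le_distFun_dirac cexν_Iio_zero t

/-- Example: explicit computation of the convolution polynomials
P(μ,ν) and Q(μ,ν) for μ = δ₀, ν = ½δ₀ + ½δ₁, showing that P(μ,ν) ≼ₓ Q(μ,ν) fails
even though (F−G)∗(F−G) ≥ 0. -/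
theorem stmt17 :
    cexP = ENNReal.ofReal (5 / 16) • Measure.dirac (0 : ℝ) +
        ENNReal.ofReal (7 / 16) • Measure.dirac (1 : ℝ) +
        ENNReal.ofReal (3 / 16) • Measure.dirac (2 : ℝ) +
        ENNReal.ofReal (1 / 16) • Measure.dirac (3 : ℝ) ∧
      cexQ = ENNReal.ofReal (41 / 128) • Measure.dirac (0 : ℝ) +
          ENNReal.ofReal (52 / 128) • Measure.dirac (1 : ℝ) +
          ENNReal.ofReal (30 / 128) • Measure.dirac (2 : ℝ) +
          ENNReal.ofReal (4 / 128) • Measure.dirac (3 : ℝ) +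
          ENNReal.ofReal (1 / 128) • Measure.dirac (4 : ℝ) ∧
      (∫ x, max 0 (x - 2) ∂cexP) = 1 / 16 ∧
      (∫ x, max 0 (x - 2) ∂cexQ) = 6 / 128 ∧
      (∫ x, max 0 (x - 2) ∂cexQ) < ∫ x, max 0 (x - 2) ∂cexP ∧
      ¬ ConvexOrder cexP cexQ ∧
      ∀ A : ℝ, 0 ≤ fconv (fun t => distFun cexμ t - distFun cexν t)
        (fun t => distFun cexμ t - distFun cexν t) A := by
  have integral_lt : ∫ x, max 0 (x - 2) ∂cexQ < ∫ x, max 0 (x - 2) ∂cexP := by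
    rw [integral_max_zero_sub_two_cexP, integral_max_zero_sub_two_cexQ]
    norm_num
  have distFun_sub_nonneg : 0 ≤ fun t ↦ distFun cexμ t - distFun cexν t :=
    fun t ↦ sub_nonneg.2 (distFun_cexν_le_distFun_cexμ t)
  refine ⟨?_, ?_, integral_max_zero_sub_two_cexP, integral_max_zero_sub_two_cexQ, integral_lt,
    fun convexOrder ↦ integral_lt.not_ge ?_, fconv_nonneg distFun_sub_nonneg distFun_sub_nonneg⟩
  · simp [cexP_eq_atomicMeasure, ennreal_ofReal_smul, ennreal_inv_ofNat_smul, Real.toNNReal_div]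
  · simp [cexQ_eq_atomicMeasure, ennreal_ofReal_smul, ennreal_inv_ofNat_smul, Real.toNNReal_div]
  · rw [cexP_eq_atomicMeasure, cexQ_eq_atomicMeasure] at convexOrder ⊢
    exact convexOrder.integral_atomicMeasure_le (convexOn_max_zero_sub 2)
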